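/- If G is a finite group whose derived subgroup G' is nilpotent, then for every g ∈ G, e(G) - e(G,g) ≤ 11. -/

import Mathlib

open Subgroup

noncomputable def genProb (G : Type*) [Group G] (Y : Set G) (n : ℕ) : ℝ :=
  (Nat.card {v : Fin n → G // Subgroup.closure (Y ∪ Set.range v) = ⊤} : ℝ) /
    (Nat.card G : ℝ) ^ n

noncomputable def eTime (G : Type*) [Group G] (Y : Set G) : ℝ :=
  ∑' n : ℕ, (1 - genProb G Y n)

/-! As `G'` is nilpotent it centralizes every chief factor `U / V` of `G`, so `U / V` is the
additive group of a finite field `F` of order `q` on which `G` acts through a character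
`χ : G →* F`. By Gaschütz, `n` elements that generate with `Y` modulo `U` generate with `Y` modulo
`V` with probability `1 - c(Y) / q ^ n`, where `c(Y)` counts the crossed homomorphisms that vanish
on `Y` and extend the isomorphism `U / V ≃ F`. Hence `n` random elements and `g` are at a chief
factor likelier to succeed than `n + 1` random elements only if `c(∅) > q c({g})`, and this forces
`g` to be a zero of all crossed homomorphisms for `χ` that vanish on `U`, but not of one that
extends the isomorphism.

A descent from `G` to `G'` and then from `G'` to `1` chooses the chief factors such that
`c(∅) ≤ q` at each of these exceptional ones, so that each of them costs at most `q ^ (-n)`; their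
characters are pairwise distinct and trivial at `g`. If `g` and `m` further elements generate `G`,
each field has at most `q ^ m` such characters. As `∑ q ^ (-2) ≤ 1`, for `n = m + k + 2` the total
cost is at most `2 ^ (-k)`, while for smaller `n` it is at most `1`, and at most `0` if `n` is
less than the minimal `m`. -/

open scoped commutatorElement

lemma commutator_le_ker {G M : Type*} [Group G] [CommMonoid M] (χ : G →* M) :
    commutator G ≤ χ.ker :=
  fun _ hx => congrArg Units.val (Abelianization.commutator_subset_ker χ.toHomUnits hx)

section CrossedHom

variable {G : Type*} [Group G] {F : Type*} [Field F] {χ : G →* F} {d : G → F}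

/-- Crossed homomorphisms (1-cocycles) from `G` to the one-dimensional module on which `G` acts
through the character `χ`. -/
def IsCrossedHom (χ : G →* F) (d : G → F) : Prop := ∀ x y, d (x * y) = d x + χ x * d y

namespace IsCrossedHom

lemma map_one (hd : IsCrossedHom χ d) : d 1 = 0 := by
  simpa using hd 1 1

lemma map_add_mul_map_inv (hd : IsCrossedHom χ d) (x : G) : d x + χ x * d x⁻¹ = 0 := by
  rw [← hd, mul_inv_cancel, hd.map_one]

lemma map_conj (hd : IsCrossedHom χ d) (x : G) {u : G} (hu : χ u = 1) :
    d (x * u * x⁻¹) = χ x * d u := by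
  rw [hd, hd, map_mul, hu]
  linear_combination hd.map_add_mul_map_inv x

/-- The zero set of a crossed homomorphism, which is a subgroup although `d` is not a
homomorphism. -/
def ker (hd : IsCrossedHom χ d) : Subgroup G where
  carrier := {x | d x = 0}
  one_mem' := hd.map_one
  mul_mem' {x y} hx hy := by
    have hx : d x = 0 := hx
    have hy : d y = 0 := hy
    simp [hd x y, hx, hy]
  inv_mem' {x} hx := by
    have hx : d x = 0 := hx
    have hχ : χ x ≠ 0 := ((Group.isUnit x).map χ).ne_zero
    simpa [hx, hχ] using hd.map_add_mul_map_inv x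

@[simp]
lemma mem_ker (hd : IsCrossedHom χ d) {x : G} : x ∈ hd.ker ↔ d x = 0 := Iff.rfl

lemma normal_inf_ker (hd : IsCrossedHom χ d) {U : Subgroup G} (hU : U.Normal) (hχ : U ≤ χ.ker) :
    (U ⊓ hd.ker).Normal where
  conj_mem u hu x := by
    have hdu : d u = 0 := hu.2
    exact ⟨hU.conj_mem u hu.1 x, show d _ = 0 by rw [hd.map_conj x (hχ hu.1), hdu, mul_zero]⟩

end IsCrossedHom

/-- The space of crossed homomorphisms vanishing on `S`. -/
def crossedHom (χ : G →* F) (S : Set G) : Submodule F (G → F) where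
  carrier := {d | IsCrossedHom χ d ∧ ∀ s ∈ S, d s = 0}
  zero_mem' := ⟨fun x y => by simp, fun _ _ => rfl⟩
  add_mem' {d e} hd he :=
    ⟨fun x y => by simp only [Pi.add_apply, hd.1 x y, he.1 x y]; ring,
      fun s hs => by simp [hd.2 s hs, he.2 s hs]⟩
  smul_mem' c d hd :=
    ⟨fun x y => by simp only [Pi.smul_apply, smul_eq_mul, hd.1 x y]; ring,
      fun s hs => by simp [hd.2 s hs]⟩

lemma crossedHom_anti {S T : Set G} (h : S ⊆ T) : crossedHom χ T ≤ crossedHom χ S :=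
  fun _ hd => ⟨hd.1, fun s hs => hd.2 s (h hs)⟩

lemma sub_one_mem_crossedHom {U : Subgroup G} (hχ : U ≤ χ.ker) :
    (fun x => χ x - 1) ∈ crossedHom χ (U : Set G) :=
  ⟨fun x y => by simp only [map_mul]; ring, fun _ hu => sub_eq_zero.2 (hχ hu)⟩

lemma crossedHom_eq_bot_of_closure_eq_top {S : Set G} (hS : closure S = ⊤) :
    crossedHom χ S = ⊥ := by
  refine (Submodule.eq_bot_iff _).2 fun d hd => funext fun x => ?_
  have hker : closure S ≤ hd.1.ker := (closure_le _).2 hd.2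
  exact hker (hS ▸ mem_top x)

lemma crossedHom_one_empty_le_commutator :
    crossedHom (1 : G →* F) ∅ ≤ crossedHom 1 (commutator G : Set G) := by
  refine fun d hd => ⟨hd.1, ?_⟩
  have hle : commutator G ≤ hd.1.ker := by
    rw [commutator_def, commutator_le]
    intro x _ y _
    have hx := hd.1.map_add_mul_map_inv x
    have hy := hd.1.map_add_mul_map_inv y
    rw [hd.1.mem_ker, commutatorElement_def, hd.1, hd.1, hd.1]
    simp only [MonoidHom.one_apply, one_mul] at hx hy ⊢
    linear_combination hx + hy
  exact hle

/-- Comparing the values of `d` at `x * h` and at `h * x`, which differ by a commutator, shows that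
`d` is the coboundary `x ↦ c * (χ x - 1)` with `c = d h / (χ h - 1)`. -/
lemma card_crossedHom_commutator_le [Finite F] (hχ : χ ≠ 1) :
    Nat.card (crossedHom χ (commutator G : Set G)) ≤ Nat.card F := by
  obtain ⟨h, hh⟩ : ∃ h, χ h ≠ 1 := by
    contrapose! hχ
    exact MonoidHom.ext hχ
  have hcob : ∀ d ∈ crossedHom χ (commutator G : Set G), ∀ x,
      d x * (χ h - 1) = (χ x - 1) * d h := by
    intro d hd x
    have hcomm : ⁅x, h⁆ ∈ commutator G := commutator_mem_commutator (mem_top x) (mem_top h)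
    have hdcomm : d ⁅x, h⁆ = 0 := hd.2 _ hcomm
    have hχcomm : χ ⁅x, h⁆ = 1 := commutator_le_ker χ hcomm
    have hxh : d (x * h) = d (h * x) := by
      rw [show x * h = ⁅x, h⁆ * (h * x) by rw [commutatorElement_def]; group, hd.1, hdcomm,
        hχcomm, zero_add, one_mul]
    rw [hd.1, hd.1] at hxh
    linear_combination -hxh
  refine Nat.card_le_card_of_injective (fun d => d.1 h) ?_
  rintro ⟨d, hd⟩ ⟨e, he⟩ (hde : d h = e h)
  refine Subtype.ext (funext fun x => mul_right_cancel₀ (sub_ne_zero.2 hh) ?_)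
  rw [hcob d hd, hcob e he, hde]

end CrossedHom

section ChiefFactor

variable {G : Type*} [Group G] {U V : Subgroup G}

/-- `U / V` is a chief factor of `G`: a minimal normal subgroup of `G / V`. -/
structure IsChiefFactor (U V : Subgroup G) : Prop where
  normal_top : U.Normal
  normal_bot : V.Normal
  lt : V < U
  eq_or_eq : ∀ W : Subgroup G, W.Normal → V ≤ W → W ≤ U → W = V ∨ W = U

lemma exists_isChiefFactor [Finite G] {S U : Subgroup G} (hS : S.Normal) (hU : U.Normal)
    (hSU : S < U) : ∃ V, S ≤ V ∧ IsChiefFactor U V := by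
  obtain ⟨V, ⟨hV, hSV, hVU⟩, hmax⟩ := WellFounded.has_min (wellFounded_gt (α := Subgroup G))
    {V | V.Normal ∧ S ≤ V ∧ V < U} ⟨S, hS, le_rfl, hSU⟩
  refine ⟨V, hSV, hU, hV, hVU, fun W hW hVW hWU => ?_⟩
  by_contra! hne
  exact hmax W ⟨hW, hSV.trans hVW, hWU.lt_of_ne hne.2⟩ (hVW.lt_of_ne hne.1.symm)

namespace IsChiefFactor

lemma le_or_le_sup (h : IsChiefFactor U V) {N : Subgroup G} (hN : N.Normal) (hNU : N ≤ U) :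
    N ≤ V ∨ U ≤ N ⊔ V := by
  have := h.normal_bot
  rcases h.eq_or_eq (N ⊔ V) inferInstance le_sup_right (sup_le hNU h.lt.le) with heq | heq
  · exact .inl (heq ▸ le_sup_left)
  · exact .inr heq.ge

lemma map_mk (h : IsChiefFactor U V) [V.Normal] :
    IsChiefFactor (U.map (QuotientGroup.mk' V)) ⊥ where
  normal_top := h.normal_top.map _ (QuotientGroup.mk'_surjective V)
  normal_bot := inferInstance
  lt := by
    rw [bot_lt_iff_ne_bot, Ne, Subgroup.map_eq_bot_iff, QuotientGroup.ker_mk']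
    exact h.lt.not_ge
  eq_or_eq W hW _ hWU := by
    have hsurj := QuotientGroup.mk'_surjective V
    have hVU : (QuotientGroup.mk' V).ker ≤ U := by simpa using h.lt.le
    have hle : W.comap (QuotientGroup.mk' V) ≤ U := by
      simpa [comap_map_eq_self hVU] using comap_mono (f := QuotientGroup.mk' V) hWU
    rw [← map_comap_eq_self_of_surjective hsurj W]
    rcases h.eq_or_eq _ (hW.comap _) (QuotientGroup.le_comap_mk' V W) hle with heq | heq
    · exact .inl (by rw [heq, QuotientGroup.map_mk'_self])
    · exact .inr (by rw [heq])

end IsChiefFactor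

lemma commutator_sup_le {A B C D : Subgroup G} [B.Normal] [D.Normal]
    (hA : ⁅A, C⁆ ≤ D) (hB : ⁅B, C⁆ ≤ D) : ⁅A ⊔ B, C⁆ ≤ D := by
  rw [commutator_le] at *
  intro x hx c hc
  obtain ⟨a, ha, b, hb, rfl⟩ := mem_sup_of_normal_right.mp hx
  rw [commutatorElement_mul_left_eq_conj_mul]
  exact D.mul_mem (Normal.conj_mem inferInstance _ (hB b hb c hc) a) (hA a ha c hc)

namespace IsChiefFactor

/-- Otherwise `U = ⁅U, G'⁆ V`, and iterating puts `U` inside every term of the lower central series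
of `G'`, modulo `V`. -/
lemma commutator_commutator_le (h : IsChiefFactor U V) (hnil : Group.IsNilpotent (commutator G)) :
    ⁅U, commutator G⁆ ≤ V := by
  have := h.normal_top
  have := h.normal_bot
  refine (h.le_or_le_sup inferInstance (commutator_le_left _ _)).resolve_right fun hU => ?_
  obtain ⟨n, hn⟩ := (isNilpotent_iff_lowerCentralSeries _).1 hnil
  have hlcs : ∀ k, U ≤ (commutator G).lowerCentralSeries k ⊔ V := by
    intro k
    induction k with
    | zero => exact hU.trans (sup_le_sup_right (commutator_le_right _ _) _)
    | succ k ih =>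
      refine hU.trans (sup_le ((commutator_mono ih le_rfl).trans ?_) le_sup_right)
      exact commutator_sup_le le_sup_left ((commutator_le_left _ _).trans le_sup_right)
  exact h.lt.not_ge (by simpa [hn] using hlcs n)

lemma commutator_self_le (h : IsChiefFactor U V) (hnil : Group.IsNilpotent (commutator G)) :
    ⁅U, U⁆ ≤ V := by
  have := h.normal_top
  have := h.normal_bot
  rcases h.le_or_le_sup (N := ⁅U, ⊤⁆) inferInstance (commutator_le_left _ _) with hU | hU
  · exact (commutator_mono le_rfl le_top).trans hU
  · have hU' : U ≤ commutator G ⊔ V :=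
      hU.trans (sup_le_sup_right (commutator_mono le_top le_rfl) _)
    refine (commutator_mono hU' le_rfl).trans (commutator_sup_le ?_ (commutator_le_left _ _))
    exact commutator_comm U (commutator G) ▸ h.commutator_commutator_le hnil

end IsChiefFactor

/-- The map `π` identifies the chief factor `U / V` with the additive group of the field `F`, on
which conjugation by `x` becomes multiplication by `χ x`. Only the values of `π` on `U` matter;
taking `π` defined on `G` lets one say that a crossed homomorphism extends it. -/
structure IsChiefCoordinate {F : Type*} [Field F] (U V : Subgroup G) (χ : G →* F)
    (π : G → F) : Prop extends IsChiefFactor U V where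
  map_mul : ∀ u ∈ U, ∀ v ∈ U, π (u * v) = π u + π v
  map_conj : ∀ x, ∀ u ∈ U, π (x * u * x⁻¹) = χ x * π u
  map_eq_zero_iff : ∀ u ∈ U, π u = 0 ↔ u ∈ V
  exists_map_eq : ∀ a, ∃ u ∈ U, π u = a

namespace IsChiefCoordinate

variable {F : Type*} [Field F] {χ : G →* F} {π : G → F}

lemma map_one (h : IsChiefCoordinate U V χ π) : π 1 = 0 :=
  (h.map_eq_zero_iff 1 U.one_mem).2 V.one_mem

lemma map_mul_inv (h : IsChiefCoordinate U V χ π) {u v : G} (hu : u ∈ U) (hv : v ∈ U) :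
    π (u * v⁻¹) = π u - π v := by
  have huv := h.map_mul (u * v⁻¹) (U.mul_mem hu (U.inv_mem hv)) v hv
  rw [inv_mul_cancel_right] at huv
  rw [huv, add_sub_cancel_right]

lemma map_eq_map_iff (h : IsChiefCoordinate U V χ π) {u v : G} (hu : u ∈ U) (hv : v ∈ U) :
    π u = π v ↔ u * v⁻¹ ∈ V := by
  rw [← h.map_eq_zero_iff _ (U.mul_mem hu (U.inv_mem hv)), h.map_mul_inv hu hv, sub_eq_zero]

lemma le_ker_of_commutator_le (h : IsChiefCoordinate U V χ π) {T : Subgroup G}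
    (hT : ⁅U, T⁆ ≤ V) : T ≤ χ.ker := by
  intro t ht
  have := h.normal_top
  obtain ⟨u, hu, hπu⟩ := h.exists_map_eq 1
  have hconj : t * u * t⁻¹ ∈ U := h.normal_top.conj_mem u hu t
  have hmem : t * u * t⁻¹ * u⁻¹ ∈ V :=
    commutator_le.1 (commutator_comm U T ▸ hT) t ht u hu
  rw [← h.map_eq_map_iff hconj hu, h.map_conj t u hu, hπu, mul_one] at hmem
  exact hmem

lemma le_ker (h : IsChiefCoordinate U V χ π) : U ≤ χ.ker := by
  refine h.le_ker_of_commutator_le (commutator_le.2 fun u hu v hv => ?_)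
  rw [commutatorElement_def, ← h.map_eq_map_iff (U.mul_mem (U.mul_mem hu hv) (U.inv_mem hu)) hv,
    h.map_mul_inv (U.mul_mem hu hv) hu, h.map_mul u hu v hv, add_sub_cancel_left]

/-- As `G = M U` and `U / V` is abelian, `M ⊓ U` is normal in `G`. -/
lemma inf_eq_of_sup_eq_top (h : IsChiefCoordinate U V χ π) {M : Subgroup G} (hVM : V ≤ M)
    (hMU : M ⊔ U = ⊤) (hM : M ≠ ⊤) : M ⊓ U = V := by
  have hU := h.normal_top
  have hnormal : (M ⊓ U).Normal := by
    refine ⟨fun y hy x => ⟨?_, hU.conj_mem y hy.2 x⟩⟩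
    obtain ⟨u, hu, m, hm, rfl⟩ := mem_sup_of_normal_left.1 (sup_comm M U ▸ hMU ▸ mem_top x)
    have hmy : m * y * m⁻¹ ∈ U := hU.conj_mem y hy.2 m
    have hπ : π (u * (m * y * m⁻¹) * u⁻¹) = π (m * y * m⁻¹) := by
      rw [h.map_conj u _ hmy, show χ u = 1 from h.le_ker hu, one_mul]
    have hV := hVM ((h.map_eq_map_iff (hU.conj_mem _ hmy u) hmy).1 hπ)
    have hmyM : m * y * m⁻¹ ∈ M := M.mul_mem (M.mul_mem hm hy.1) (M.inv_mem hm)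
    simpa [mul_assoc] using M.mul_mem hV hmyM
  refine (h.eq_or_eq _ hnormal (le_inf hVM h.lt.le) inf_le_right).resolve_right fun heq => hM ?_
  rw [← hMU, sup_eq_left.2 (inf_eq_right.1 heq)]

end IsChiefCoordinate

/-- The crossed homomorphisms that agree with `π` on `U` and vanish on `Y`. If `π` is a coordinate
on the chief factor `U / V`, their zero sets are the complements of `U / V` in `G / V` that
contain `Y`. -/
def extensions {F : Type*} [Field F] (χ : G →* F) (π : G → F) (U : Subgroup G) (Y : Set G) :
    Set (G → F) :=
  {d | d ∈ crossedHom χ Y ∧ Set.EqOn d π U}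

end ChiefFactor

section FiniteFields

/-- The pair `(p, k)` is the index of the field with `p ^ (k + 1)` elements; representing each
finite field once makes it possible to count characters field by field. -/
abbrev FieldIndex := Nat.Primes × ℕ

instance (i : FieldIndex) : Fact (i.1 : ℕ).Prime := ⟨i.1.2⟩

/-- The finite field with index `i`. -/
abbrev IndexedField (i : FieldIndex) : Type := GaloisField i.1 (i.2 + 1)

lemma card_indexedField (i : FieldIndex) : Nat.card (IndexedField i) = (i.1 : ℕ) ^ (i.2 + 1) :=
  GaloisField.card _ _ i.2.succ_ne_zero

lemma card_indexedField_injective : Function.Injective fun i => Nat.card (IndexedField i) := by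
  intro i j hij
  simp only [card_indexedField] at hij
  exact Nat.Primes.prodNatEquiv.injective (Subtype.ext hij)

lemma exists_ringEquiv_indexedField (K : Type*) [Field K] [Finite K] :
    ∃ i, Nonempty (K ≃+* IndexedField i) := by
  have := Fintype.ofFinite K
  obtain ⟨p, hp⟩ := CharP.exists K
  obtain ⟨n, hprime, hcard⟩ := FiniteField.card K p
  let i : FieldIndex := (⟨p, hprime⟩, n - 1)
  have := Fintype.ofFinite (IndexedField i)
  refine ⟨i, ⟨FiniteField.ringEquivOfCardEq ?_⟩⟩
  rw [← Nat.card_eq_fintype_card (α := IndexedField i), card_indexedField, hcard,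
    Nat.sub_add_cancel n.pos]

open scoped IsMulCommutative in
/-- The endomorphisms `ρ x` generate a commutative ring `R` over which `A` is a simple module, hence
`A ≃ R ⧸ I` for a maximal ideal `I`. -/
lemma exists_addEquiv_indexedField {G A : Type*} [Monoid G] [AddCommGroup A] [Finite A]
    [Nontrivial A] (ρ : G →* AddMonoid.End A) (hcomm : ∀ x y, ρ x * ρ y = ρ y * ρ x)
    (hirr : ∀ B : AddSubgroup A, (∀ x, ∀ b ∈ B, ρ x b ∈ B) → B = ⊥ ∨ B = ⊤) :
    ∃ (i : FieldIndex) (χ : G →* IndexedField i) (θ : A ≃+ IndexedField i),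
      ∀ x a, θ (ρ x a) = χ x * θ a := by
  let R := Subring.closure (Set.range ρ)
  have hmem : ∀ x, ρ x ∈ R := fun x => Subring.subset_closure ⟨x, rfl⟩
  have : IsMulCommutative R :=
    Subring.isMulCommutative_closure (by rintro _ ⟨x, rfl⟩ _ ⟨y, rfl⟩; exact hcomm x y)
  have : IsSimpleModule R A := by
    refine { eq_bot_or_eq_top := fun B => ?_ }
    rcases hirr B.toAddSubgroup fun x b hb => B.smul_mem ⟨ρ x, hmem x⟩ hb with hB | hB
    · exact .inl (Submodule.toAddSubgroup_injective hB)
    · exact .inr (Submodule.toAddSubgroup_injective hB)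
  obtain ⟨I, hI, ⟨φ⟩⟩ := (isSimpleModule_iff_quot_maximal (R := R) (M := A)).1 this
  let : Field (R ⧸ I) := Ideal.Quotient.field I
  have : Finite (R ⧸ I) := Finite.of_equiv A φ.toEquiv
  obtain ⟨i, ⟨ψ⟩⟩ := exists_ringEquiv_indexedField (R ⧸ I)
  let χ : G →* R ⧸ I := (Ideal.Quotient.mk I : R →* R ⧸ I).comp (ρ.codRestrict R hmem)
  have hφ : ∀ x a, φ (ρ x a) = χ x * φ a := fun x a => φ.map_smul ⟨ρ x, hmem x⟩ a
  refine ⟨i, (ψ : R ⧸ I →* IndexedField i).comp χ, φ.toAddEquiv.trans ψ.toAddEquiv, fun x a => ?_⟩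
  exact (congrArg ψ (hφ x a)).trans (map_mul ψ _ _)

end FiniteFields

section ExistenceOfCoordinates

variable {G : Type*} [Group G] {U V : Subgroup G}

lemma IsChiefFactor.subgroup_eq_bot_or_eq_top [U.Normal] (h : IsChiefFactor U ⊥)
    (B : Subgroup U) (hB : ∀ x : G, ∀ b ∈ B, MulAut.conjNormal x b ∈ B) : B = ⊥ ∨ B = ⊤ := by
  have hnormal : (B.map U.subtype).Normal :=
    ⟨by rintro _ ⟨b, hb, rfl⟩ x; exact ⟨_, hB x b hb, MulAut.conjNormal_apply x b⟩⟩
  rcases h.eq_or_eq _ hnormal bot_le (map_subtype_le B) with heq | heq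
  · exact .inl ((map_eq_bot_iff_of_injective _ U.subtype_injective).1 heq)
  · refine .inr (map_injective U.subtype_injective ?_)
    rw [heq, ← MonoidHom.range_eq_map, range_subtype]

lemma conjNormal_mul_comm [U.Normal] (hU : ⁅U, commutator G⁆ = ⊥) (x y : G) :
    (MulAut.conjNormal (x * y) : MulAut U) = MulAut.conjNormal (y * x) := by
  have hker : ∀ c ∈ commutator G, (MulAut.conjNormal c : MulAut U) = 1 := by
    intro c hc
    ext u
    have hcu := commutator_eq_bot_iff_le_centralizer.1 hU u.2 c hc
    rw [MulAut.conjNormal_apply, hcu, mul_inv_cancel_right, MulAut.one_apply]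
  rw [show x * y = ⁅x, y⁆ * (y * x) by rw [commutatorElement_def]; group, map_mul,
    hker _ (commutator_mem_commutator (mem_top x) (mem_top y)), one_mul]

open scoped IsMulCommutative Classical in
lemma IsChiefFactor.exists_isChiefCoordinate_bot [Finite G] (h : IsChiefFactor U ⊥)
    (hU : ⁅U, U⁆ = ⊥) (hU' : ⁅U, commutator G⁆ = ⊥) :
    ∃ (i : FieldIndex) (χ : G →* IndexedField i) (π : G → IndexedField i),
      IsChiefCoordinate U ⊥ χ π := by
  have := h.normal_top
  have : IsMulCommutative U := le_centralizer_iff_isMulCommutative.1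
    (commutator_eq_bot_iff_le_centralizer.1 hU)
  have : Nontrivial U := (nontrivial_iff_ne_bot U).2 h.lt.ne'
  let ρ : G →* AddMonoid.End (Additive U) :=
    (monoidEndToAdditive U).toMonoidHom.comp
      ((MulDistribMulAction.toMonoidEnd (MulAut U) U).comp MulAut.conjNormal)
  have hρ : ∀ x y, ρ x * ρ y = ρ y * ρ x := by
    intro x y
    rw [← map_mul, ← map_mul]
    exact congrArg ((monoidEndToAdditive U).toMonoidHom.comp
      (MulDistribMulAction.toMonoidEnd (MulAut U) U)) (conjNormal_mul_comm hU' x y)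
  have hirr : ∀ B : AddSubgroup (Additive U), (∀ x, ∀ b ∈ B, ρ x b ∈ B) → B = ⊥ ∨ B = ⊤ := by
    intro B hB
    rcases h.subgroup_eq_bot_or_eq_top (AddSubgroup.toSubgroup' B) hB with heq | heq
    · exact .inl (AddSubgroup.toSubgroup'.injective heq)
    · exact .inr (AddSubgroup.toSubgroup'.injective heq)
  obtain ⟨i, χ, θ, hθ⟩ := exists_addEquiv_indexedField ρ hρ hirr
  let π : G → IndexedField i := fun x => if hx : x ∈ U then θ (Additive.ofMul ⟨x, hx⟩) else 0
  have hπ : ∀ u (hu : u ∈ U), π u = θ (Additive.ofMul ⟨u, hu⟩) := fun u hu => dif_pos hu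
  refine ⟨i, χ, π, h, ?_, ?_, ?_, ?_⟩
  · intro u hu v hv
    rw [hπ _ (U.mul_mem hu hv), hπ u hu, hπ v hv, ← map_add]
    rfl
  · intro x u hu
    rw [hπ _ (h.normal_top.conj_mem u hu x), hπ u hu, ← hθ]
    rfl
  · intro u hu
    rw [hπ u hu, map_eq_zero_iff θ θ.injective, ofMul_eq_zero, mk_eq_one, mem_bot]
  · intro a
    obtain ⟨u, rfl⟩ := θ.surjective a
    exact ⟨_, u.toMul.2, hπ _ u.toMul.2⟩

lemma IsChiefCoordinate.comp_mk {F : Type*} [Field F] [V.Normal] {χ : G ⧸ V →* F} {π : G ⧸ V → F}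
    (h : IsChiefFactor U V)
    (hπ : IsChiefCoordinate (U.map (QuotientGroup.mk' V)) ⊥ χ π) :
    IsChiefCoordinate U V (χ.comp (QuotientGroup.mk' V)) (π ∘ QuotientGroup.mk' V) where
  toIsChiefFactor := h
  map_mul u hu v hv := by
    simpa using hπ.map_mul _ (mem_map_of_mem _ hu) _ (mem_map_of_mem _ hv)
  map_conj x u hu := by simpa using hπ.map_conj (QuotientGroup.mk' V x) _ (mem_map_of_mem _ hu)
  map_eq_zero_iff u hu := by
    simpa using hπ.map_eq_zero_iff _ (mem_map_of_mem _ hu)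
  exists_map_eq a := by
    obtain ⟨_, ⟨u, hu, rfl⟩, hua⟩ := hπ.exists_map_eq a
    exact ⟨u, hu, hua⟩

lemma IsChiefFactor.exists_isChiefCoordinate [Finite G] (h : IsChiefFactor U V)
    (hnil : Group.IsNilpotent (commutator G)) :
    ∃ (i : FieldIndex) (χ : G →* IndexedField i) (π : G → IndexedField i),
      IsChiefCoordinate U V χ π := by
  have := h.normal_bot
  have hsurj := QuotientGroup.mk'_surjective V
  have hbot : ∀ H : Subgroup G, ⁅U, H⁆ ≤ V →
      ⁅U.map (QuotientGroup.mk' V), H.map (QuotientGroup.mk' V)⁆ = ⊥ := by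
    intro H hH
    rw [← map_commutator, Subgroup.map_eq_bot_iff, QuotientGroup.ker_mk']
    exact hH
  have hcomm : commutator (G ⧸ V) = (commutator G).map (QuotientGroup.mk' V) := by
    rw [commutator_def, commutator_def, map_commutator, map_top_of_surjective _ hsurj]
  obtain ⟨i, χ, π, hπ⟩ := h.map_mk.exists_isChiefCoordinate_bot
    (hbot U (h.commutator_self_le hnil)) (hcomm ▸ hbot _ (h.commutator_commutator_le hnil))
  exact ⟨i, _, _, hπ.comp_mk h⟩

end ExistenceOfCoordinates

section Gaschutz

variable {G : Type*} [Group G] {U V : Subgroup G} {F : Type*} [Field F] {χ : G →* F} {π : G → F}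

lemma extensions_subsingleton {Y : Set G} (hY : closure Y ⊔ U = ⊤) :
    (extensions χ π U Y).Subsingleton := by
  rintro d ⟨hd, hdU⟩ e ⟨he, heU⟩
  have hsub : d - e ∈ crossedHom χ (Y ∪ U) := by
    refine ⟨(sub_mem hd he).1, ?_⟩
    rintro x (hx | hx)
    · exact (sub_mem hd he).2 x hx
    · exact sub_eq_zero.2 ((hdU hx).trans (heU hx).symm)
  rw [crossedHom_eq_bot_of_closure_eq_top (by rw [Subgroup.closure_union, closure_eq, hY])] at hsub
  exact sub_eq_zero.1 hsub

lemma mem_extensions_union_range {Y : Set G} {n : ℕ} {v : Fin n → G} {d : G → F} :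
    d ∈ extensions χ π U (Y ∪ Set.range v) ↔ d ∈ extensions χ π U Y ∧ ∀ j, d (v j) = 0 := by
  constructor
  · rintro ⟨⟨hd, hdY⟩, hdU⟩
    exact ⟨⟨⟨hd, fun y hy => hdY y (.inl hy)⟩, hdU⟩, fun j => hdY _ (.inr ⟨j, rfl⟩)⟩
  · rintro ⟨⟨⟨hd, hdY⟩, hdU⟩, hv⟩
    refine ⟨⟨hd, ?_⟩, hdU⟩
    rintro y (hy | ⟨j, rfl⟩)
    exacts [hdY y hy, hv j]

namespace IsChiefCoordinate

lemma map_mul_inv_eq_of_inf_le (h : IsChiefCoordinate U V χ π) {M : Subgroup G}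
    (hM : M ⊓ U ≤ V) {x m k : G} (hm : m ∈ M) (hk : k ∈ M) (hxm : x * m⁻¹ ∈ U)
    (hxk : x * k⁻¹ ∈ U) : π (x * m⁻¹) = π (x * k⁻¹) := by
  have hkm : k * m⁻¹ ∈ V := by
    refine hM ⟨M.mul_mem hk (M.inv_mem hm), ?_⟩
    simpa [mul_assoc] using U.mul_mem (U.inv_mem hxk) hxm
  rw [h.map_eq_map_iff hxm hxk]
  simpa [mul_assoc] using h.normal_bot.conj_mem _ hkm (x * m⁻¹)

/-- Writing `x = u m` with `u ∈ U` and `m ∈ M`, the extension is `d x = π u`. -/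
lemma exists_isCrossedHom (h : IsChiefCoordinate U V χ π) {M : Subgroup G}
    (hMU : M ⊔ U = ⊤) (hM : M ⊓ U ≤ V) :
    ∃ d, IsCrossedHom χ d ∧ ∀ x, ∀ m ∈ M, x * m⁻¹ ∈ U → d x = π (x * m⁻¹) := by
  have hU := h.normal_top
  have hdec : ∀ x, ∃ m ∈ M, x * m⁻¹ ∈ U := by
    intro x
    obtain ⟨u, hu, m, hm, rfl⟩ := mem_sup_of_normal_left.1 (sup_comm M U ▸ hMU ▸ mem_top x)
    exact ⟨m, hm, by simpa using hu⟩
  choose f hfM hfU using hdec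
  have hd : ∀ x, ∀ m ∈ M, x * m⁻¹ ∈ U → π (x * (f x)⁻¹) = π (x * m⁻¹) :=
    fun x m hm hxm => h.map_mul_inv_eq_of_inf_le hM (hfM x) hm (hfU x) hxm
  refine ⟨fun x => π (x * (f x)⁻¹), fun x y => ?_, hd⟩
  have hconj : x * (y * (f y)⁻¹) * x⁻¹ ∈ U := hU.conj_mem _ (hfU y) x
  have hxy : x * y * (f x * f y)⁻¹ = x * (y * (f y)⁻¹) * x⁻¹ * (x * (f x)⁻¹) := by group
  have hmem : x * y * (f x * f y)⁻¹ ∈ U := hxy ▸ U.mul_mem hconj (hfU x)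
  beta_reduce
  rw [hd _ _ (M.mul_mem (hfM x) (hfM y)) hmem, hxy, h.map_mul _ hconj _ (hfU x),
    h.map_conj x _ (hfU y), add_comm]

lemma extensions_nonempty_iff (h : IsChiefCoordinate U V χ π) {Y : Set G}
    (hY : closure Y ⊔ U = ⊤) : (extensions χ π U Y).Nonempty ↔ closure Y ⊔ V ≠ ⊤ := by
  constructor
  · rintro ⟨d, hd, hdU⟩ hV
    obtain ⟨u, hu, hπu⟩ := h.exists_map_eq 1
    have hsub : d ∈ crossedHom χ (Y ∪ V) := by
      refine ⟨hd.1, ?_⟩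
      rintro x (hx | hx)
      · exact hd.2 x hx
      · exact (hdU (h.lt.le hx)).trans ((h.map_eq_zero_iff x (h.lt.le hx)).2 hx)
    rw [crossedHom_eq_bot_of_closure_eq_top
      (by rw [Subgroup.closure_union, closure_eq, hV])] at hsub
    refine one_ne_zero (α := F) ?_
    rw [← hπu, ← hdU hu, (Submodule.mem_bot F).1 hsub, Pi.zero_apply]
  · intro hV
    have hMU : closure Y ⊔ V ⊔ U = ⊤ := by rw [sup_assoc, sup_eq_right.2 h.lt.le, hY]
    obtain ⟨d, hd, hdM⟩ :=
      h.exists_isCrossedHom hMU (h.inf_eq_of_sup_eq_top le_sup_right hMU hV).le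
    refine ⟨d, ⟨hd, fun y hy => ?_⟩, fun u hu => ?_⟩
    · have hyM : y ∈ closure Y ⊔ V := mem_sup_left (subset_closure hy)
      rw [hdM y y hyM (mul_inv_cancel y ▸ U.one_mem), mul_inv_cancel, h.map_one]
    · rw [hdM u 1 (one_mem _) (by simpa using hu), inv_one, mul_one]

end IsChiefCoordinate

/-- The `n`-tuples that together with `Y` generate `G` modulo `U`. -/
def generatingTuples (Y : Set G) (U : Subgroup G) (n : ℕ) : Set (Fin n → G) :=
  {v | closure (Y ∪ Set.range v) ⊔ U = ⊤}

lemma generatingTuples_mono (Y : Set G) (h : V ≤ U) (n : ℕ) :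
    generatingTuples Y V n ⊆ generatingTuples Y U n :=
  fun _ hv => top_unique (hv.ge.trans (sup_le_sup_left h _))

lemma mul_mem_generatingTuples {Y : Set G} {n : ℕ} {u v : Fin n → G} (hu : ∀ j, u j ∈ U)
    (hv : v ∈ generatingTuples Y U n) : u * v ∈ generatingTuples Y U n := by
  refine top_unique (hv.ge.trans (sup_le ((closure_le _).2 ?_) le_sup_right))
  rintro x (hx | ⟨j, rfl⟩)
  · exact mem_sup_left (subset_closure (.inl hx))
  · have huv : u j * v j ∈ closure (Y ∪ Set.range (u * v)) ⊔ U :=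
      mem_sup_left (subset_closure (.inr ⟨j, rfl⟩))
    have hmem := mul_mem (mem_sup_right (U.inv_mem (hu j))) huv
    rwa [inv_mul_cancel_left] at hmem

namespace IsChiefCoordinate

/-- Left translation by tuples in `U` permutes the generating tuples modulo `U` and shifts the
values of `d`, so every tuple of values of `d` is taken equally often. -/
lemma card_generatingTuples_vanishing_mul (h : IsChiefCoordinate U V χ π) {Y : Set G} {d : G → F}
    (hd : d ∈ extensions χ π U Y) (n : ℕ) :
    Nat.card {v // v ∈ generatingTuples Y U n ∧ ∀ j, d (v j) = 0} * Nat.card F ^ n =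
      Nat.card (generatingTuples Y U n) := by
  choose s hsU hs using h.exists_map_eq
  have hds : ∀ a x, d (s a * x) = a + d x := by
    intro a x
    rw [hd.1.1, hd.2 (hsU a), hs, show χ (s a) = 1 from h.le_ker (hsU a), one_mul]
  have hds' : ∀ a x, d ((s a)⁻¹ * x) = d x - a := by
    intro a x
    rw [eq_sub_iff_add_eq', ← hds, mul_inv_cancel_left]
  let shift : ({v // v ∈ generatingTuples Y U n ∧ ∀ j, d (v j) = 0} × (Fin n → F)) ≃
      generatingTuples Y U n :=
    { toFun := fun p => ⟨(fun j => s (p.2 j)) * p.1.1,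
        mul_mem_generatingTuples (fun j => hsU _) p.1.2.1⟩
      invFun := fun w => (⟨(fun j => (s (d (w.1 j)))⁻¹) * w.1,
        mul_mem_generatingTuples (fun j => U.inv_mem (hsU _)) w.2,
        fun j => by rw [Pi.mul_apply, hds', sub_self]⟩, fun j => d (w.1 j))
      left_inv := by
        rintro ⟨⟨v, hv, hdv⟩, a⟩
        ext j
        · simp [hds, hdv]
        · simp [hds, hdv]
      right_inv := by
        rintro ⟨w, hw⟩
        ext j
        simp }
  rw [← Nat.card_congr shift, Nat.card_prod, Nat.card_fun, Nat.card_fin]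

lemma card_generatingTuples_diff (h : IsChiefCoordinate U V χ π) [Finite G] [Finite F]
    (Y : Set G) (n : ℕ) :
    Nat.card ↑(generatingTuples Y U n \ generatingTuples Y V n) * Nat.card F ^ n =
      Nat.card (extensions χ π U Y) * Nat.card (generatingTuples Y U n) := by
  have := Fintype.ofFinite (extensions χ π U Y)
  let forget : (Σ d : extensions χ π U Y, {v // v ∈ generatingTuples Y U n ∧ ∀ j, d.1 (v j) = 0}) →
      ↑(generatingTuples Y U n \ generatingTuples Y V n) := fun p =>
    ⟨p.2.1, p.2.2.1, (h.extensions_nonempty_iff p.2.2.1).1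
      ⟨p.1, mem_extensions_union_range.2 ⟨p.1.2, p.2.2.2⟩⟩⟩
  have hforget : Function.Bijective forget := by
    constructor
    · rintro ⟨⟨d, hd⟩, ⟨v, hv, hdv⟩⟩ ⟨⟨e, he⟩, ⟨w, hw, hew⟩⟩ heq
      obtain rfl : v = w := congrArg Subtype.val heq
      obtain rfl : d = e := extensions_subsingleton hv
        (mem_extensions_union_range.2 ⟨hd, hdv⟩) (mem_extensions_union_range.2 ⟨he, hew⟩)
      rfl
    · rintro ⟨v, hv, hvV⟩
      obtain ⟨d, hd⟩ := (h.extensions_nonempty_iff hv).2 hvV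
      rw [mem_extensions_union_range] at hd
      exact ⟨⟨⟨d, hd.1⟩, ⟨v, hv, hd.2⟩⟩, rfl⟩
  rw [← Nat.card_congr (Equiv.ofBijective forget hforget), Nat.card_sigma, Finset.sum_mul,
    Finset.sum_congr rfl fun d _ => h.card_generatingTuples_vanishing_mul d.2 n]
  simp

end IsChiefCoordinate

/-- The probability that `n` random elements together with `Y` generate `G` modulo `U`. -/
noncomputable def relGenProb (Y : Set G) (U : Subgroup G) (n : ℕ) : ℝ :=
  Nat.card (generatingTuples Y U n) / (Nat.card G : ℝ) ^ n

lemma relGenProb_bot (Y : Set G) (n : ℕ) : relGenProb Y ⊥ n = genProb G Y n := by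
  simp only [relGenProb, genProb, generatingTuples, sup_bot_eq, Set.coe_ofPred]

lemma relGenProb_nonneg (Y : Set G) (U : Subgroup G) (n : ℕ) : 0 ≤ relGenProb Y U n := by
  unfold relGenProb
  positivity

lemma relGenProb_top [Finite G] (Y : Set G) (n : ℕ) : relGenProb Y ⊤ n = 1 := by
  simp [relGenProb, generatingTuples, Nat.card_fun]

lemma relGenProb_mono [Finite G] (Y : Set G) (h : V ≤ U) (n : ℕ) :
    relGenProb Y V n ≤ relGenProb Y U n := by
  unfold relGenProb
  gcongr
  exact Nat.card_mono (Set.toFinite _) (generatingTuples_mono Y h n)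

lemma relGenProb_le_one [Finite G] (Y : Set G) (U : Subgroup G) (n : ℕ) : relGenProb Y U n ≤ 1 :=
  relGenProb_top Y n ▸ relGenProb_mono Y le_top n

lemma IsChiefCoordinate.relGenProb_eq [Finite G] [Finite F] (h : IsChiefCoordinate U V χ π)
    (Y : Set G) (n : ℕ) :
    relGenProb Y V n =
      relGenProb Y U n * (1 - Nat.card (extensions χ π U Y) / (Nat.card F : ℝ) ^ n) := by
  have hsplit : Nat.card ↑(generatingTuples Y U n \ generatingTuples Y V n) +
      Nat.card (generatingTuples Y V n) = Nat.card (generatingTuples Y U n) :=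
    Set.ncard_sdiff_add_ncard_of_subset (generatingTuples_mono Y h.lt.le n)
  have hdiff := h.card_generatingTuples_diff Y n
  have hG : (Nat.card G : ℝ) ≠ 0 := Nat.cast_ne_zero.2 Nat.card_pos.ne'
  have hF : (Nat.card F : ℝ) ≠ 0 := Nat.cast_ne_zero.2 Nat.card_pos.ne'
  unfold relGenProb
  rify at hsplit hdiff
  field_simp
  linear_combination (Nat.card F : ℝ) ^ n * hsplit - hdiff

end Gaschutz

section Detection

variable {G : Type*} [Group G] {g : G} {U V W S T : Subgroup G}
  {F : Type*} [Field F] {χ : G →* F} {π d : G → F}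

/-- Some crossed homomorphism with character `χ` vanishes on `U` but not at `g`. -/
def Detects (χ : G →* F) (U : Subgroup G) (g : G) : Prop :=
  ∃ d ∈ crossedHom χ (U : Set G), d g ≠ 0

lemma Detects.anti (hVU : V ≤ U) : Detects χ U g → Detects χ V g :=
  fun ⟨d, hd, hdg⟩ => ⟨d, crossedHom_anti hVU hd, hdg⟩

lemma map_eq_one_of_not_detects (hU : U ≤ χ.ker) (hg : ¬ Detects χ U g) : χ g = 1 := by
  by_contra hne
  exact hg ⟨_, sub_one_mem_crossedHom hU, sub_ne_zero.2 hne⟩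

lemma card_extensions_le_mul_of_detects [Finite G] [Finite F]
    (hg : Detects χ U g) :
    Nat.card (extensions χ π U ∅) ≤ Nat.card F * Nat.card (extensions χ π U {g}) := by
  obtain ⟨e, he, heg⟩ := hg
  have hcorrect : ∀ d ∈ extensions χ π U ∅, d - (d g / e g) • e ∈ extensions χ π U {g} := by
    rintro d ⟨hd, hdU⟩
    refine ⟨⟨(sub_mem hd (Submodule.smul_mem _ _ (crossedHom_anti (Set.empty_subset _) he))).1, ?_⟩,
      fun u hu => ?_⟩
    · rintro _ rfl
      simp [heg]
    · simpa [he.2 u hu] using hdU hu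
  rw [← Nat.card_prod]
  refine Nat.card_le_card_of_injective
    (fun d : extensions χ π U ∅ => (d.1 g / e g, (⟨_, hcorrect d.1 d.2⟩ : extensions χ π U {g}))) ?_
  rintro ⟨d, hd⟩ ⟨d', hd'⟩ heq
  obtain ⟨hcoeff, hdiff⟩ := Prod.ext_iff.1 heq
  have hdiff := congrArg Subtype.val hdiff
  simp only at hcoeff hdiff
  rw [hcoeff] at hdiff
  exact Subtype.ext (sub_left_injective hdiff)

lemma card_extensions_le_mul_or [Finite G] [Finite F] (g : G) :
    Nat.card (extensions χ π U ∅) ≤ Nat.card F * Nat.card (extensions χ π U {g}) ∨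
      ¬ Detects χ U g ∧ ∃ d ∈ extensions χ π U ∅, d g ≠ 0 := by
  by_cases hg : Detects χ U g
  · exact .inl (card_extensions_le_mul_of_detects hg)
  by_cases hd : ∃ d ∈ extensions χ π U ∅, d g ≠ 0
  · exact .inr ⟨hg, hd⟩
  push Not at hd
  have hsub : extensions χ π U ∅ ⊆ extensions χ π U {g} :=
    fun d hdE => ⟨⟨hdE.1.1, by rintro _ rfl; exact hd d hdE⟩, hdE.2⟩
  exact .inl ((Nat.card_mono (Set.toFinite _) hsub).trans
    (Nat.le_mul_of_pos_left _ Nat.card_pos))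

lemma card_extensions_le [Finite G] [Finite F] :
    Nat.card (extensions χ π U ∅) ≤ Nat.card (crossedHom χ (U : Set G)) := by
  rcases (extensions χ π U ∅).eq_empty_or_nonempty with hempty | ⟨d₀, hd₀, hd₀U⟩
  · simp [hempty]
  have hsub : ∀ d ∈ extensions χ π U ∅, d - d₀ ∈ crossedHom χ (U : Set G) :=
    fun d hd => ⟨(sub_mem hd.1 hd₀).1,
      fun u hu => sub_eq_zero.2 ((hd.2 hu).trans (hd₀U hu).symm)⟩
  refine Nat.card_le_card_of_injective
    (fun d : extensions χ π U ∅ => (⟨_, hsub d.1 d.2⟩ : crossedHom χ (U : Set G)))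
    fun d d' heq => ?_
  exact Subtype.ext (sub_left_injective (congrArg Subtype.val heq))

namespace IsChiefCoordinate

lemma exists_inv_mul_mem_ker (h : IsChiefCoordinate W V χ π) (hWU : W ≤ U) (hχ : U ≤ χ.ker)
    (hd : IsCrossedHom χ d) (hdπ : Set.EqOn d π W) :
    ∀ u ∈ U, ∃ w ∈ W, d w = d u ∧ u⁻¹ * w ∈ U ⊓ hd.ker := by
  intro u hu
  obtain ⟨w, hw, hπw⟩ := h.exists_map_eq (d u)
  have hdw : d w = d u := (hdπ hw).trans hπw
  refine ⟨w, hw, hdw, U.mul_mem (U.inv_mem hu) (hWU hw), ?_⟩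
  have hinv := hd.map_add_mul_map_inv u
  rw [show χ u = 1 from hχ hu, one_mul] at hinv
  change d (u⁻¹ * w) = 0
  rw [hd, show χ u⁻¹ = 1 from hχ (U.inv_mem hu), one_mul, hdw, add_comm, hinv]

/-- Restriction from `U` to `W` identifies `U / (U ⊓ ker d)` with `W / V`. -/
lemma lift (h : IsChiefCoordinate W V χ π) (hU : U.Normal) (hWU : W ≤ U) (hχ : U ≤ χ.ker)
    (hd : IsCrossedHom χ d) (hdπ : Set.EqOn d π W) :
    IsChiefCoordinate U (U ⊓ hd.ker) χ d where
  normal_top := hU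
  normal_bot := hd.normal_inf_ker hU hχ
  lt := by
    obtain ⟨w, hw, hπw⟩ := h.exists_map_eq 1
    refine lt_of_le_not_ge inf_le_left fun hle => one_ne_zero (α := F) ?_
    rw [← hπw, ← hdπ hw, show d w = 0 from (hle (hWU hw)).2]
  eq_or_eq N hN hkerN hNU := by
    have hVN : V ≤ N := fun v hv => hkerN ⟨hWU (h.lt.le hv),
      (hdπ (h.lt.le hv)).trans ((h.map_eq_zero_iff v (h.lt.le hv)).2 hv)⟩
    have hW := h.normal_top
    rcases h.eq_or_eq (N ⊓ W) inferInstance (le_inf hVN h.lt.le) inf_le_right with heq | heq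
    · refine .inl (le_antisymm (fun n hn => ⟨hNU hn, ?_⟩) hkerN)
      obtain ⟨w, hw, hdw, hnw⟩ := h.exists_inv_mul_mem_ker hWU hχ hd hdπ n (hNU hn)
      have hwV : w ∈ V := heq.le ⟨by simpa using N.mul_mem hn (hkerN hnw), hw⟩
      exact hdw.symm.trans ((hdπ hw).trans ((h.map_eq_zero_iff w hw).2 hwV))
    · refine .inr (le_antisymm hNU fun u hu => ?_)
      obtain ⟨w, hw, -, huw⟩ := h.exists_inv_mul_mem_ker hWU hχ hd hdπ u hu
      simpa using N.mul_mem (heq.ge hw).1 (N.inv_mem (hkerN huw))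
  map_mul u hu v _ := by rw [hd, show χ u = 1 from hχ hu, one_mul]
  map_conj x u hu := hd.map_conj x (hχ hu)
  map_eq_zero_iff u hu := by simp [hu]
  exists_map_eq a := by
    obtain ⟨w, hw, hπw⟩ := h.exists_map_eq a
    exact ⟨w, hWU hw, (hdπ hw).trans hπw⟩

/-- Schur's lemma: the kernel of `e` on `U` is normal and contains `V`, so it is `V`. -/
lemma exists_addMonoidHom_comp_eq (h : IsChiefCoordinate U V χ π) {F' : Type*} [Field F']
    {χ' : G →* F'} {e : G → F'} (hχ' : U ≤ χ'.ker) (he : e ∈ crossedHom χ' (V : Set G))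
    (heU : e ∉ crossedHom χ' (U : Set G)) :
    ∃ φ : F →+ F', Function.Injective φ ∧ (∀ x a, φ (χ x * a) = χ' x * φ a) ∧
      ∀ u ∈ U, φ (π u) = e u := by
  have heV : ∀ u ∈ U, e u = 0 → u ∈ V := by
    have hne : U ⊓ he.1.ker ≠ U := fun heq => heU ⟨he.1, fun u hu => (heq.ge hu).2⟩
    have heq := (h.eq_or_eq _ (he.1.normal_inf_ker h.normal_top hχ')
      (le_inf h.lt.le he.2) inf_le_left).resolve_right hne
    exact fun u hu heu => heq.le ⟨hu, heu⟩
  have hmul : ∀ u ∈ U, ∀ x, e (u * x) = e u + e x := by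
    intro u hu x
    rw [he.1, show χ' u = 1 from hχ' hu, one_mul]
  choose s hsU hs using h.exists_map_eq
  have hcomp : ∀ u ∈ U, e (s (π u)) = e u := by
    intro u hu
    have hV := (h.map_eq_map_iff (hsU (π u)) hu).1 (hs (π u))
    rw [← inv_mul_cancel_right (s (π u)) u, hmul _ (h.lt.le hV), he.2 _ hV, zero_add]
  refine ⟨AddMonoidHom.mk' (fun a => e (s a)) fun a b => ?_, ?_, fun x a => ?_, hcomp⟩
  · rw [← hmul _ (hsU a), ← hcomp _ (U.mul_mem (hsU a) (hsU b)), h.map_mul _ (hsU a) _ (hsU b), hs,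
      hs]
  · rw [injective_iff_map_eq_zero]
    intro a ha
    rw [← hs a, h.map_eq_zero_iff _ (hsU a)]
    exact heV _ (hsU a) ha
  · change e (s (χ x * a)) = χ' x * e (s a)
    rw [← he.1.map_conj x (hχ' (hsU a)), ← hcomp _ (h.normal_top.conj_mem _ (hsU a) x),
      h.map_conj x _ (hsU a), hs]

end IsChiefCoordinate

/-- The crossed homomorphism `d` is a coordinate on `U / V` and shows that `g`, not detected at `U`,
is detected at `V`. Generating with the help of `g` is easier than with a random element only at
such factors. -/
structure IsFirstDetection (g : G) (U V : Subgroup G) (χ : G →* F) (d : G → F) : Prop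
    extends IsChiefCoordinate U V χ d where
  isCrossedHom : IsCrossedHom χ d
  map_ne_zero : d g ≠ 0
  not_detects : ¬ Detects χ U g

namespace IsFirstDetection

lemma detects (h : IsFirstDetection g U V χ d) : Detects χ V g :=
  ⟨d, ⟨h.isCrossedHom, fun v hv => (h.map_eq_zero_iff v (h.lt.le hv)).2 hv⟩, h.map_ne_zero⟩

lemma not_empty_le (h : IsFirstDetection g U V χ d) (hUT : U ≤ T) :
    ¬ crossedHom χ ∅ ≤ crossedHom χ (T : Set G) := by
  intro hle
  obtain ⟨u, hu, hdu⟩ := h.exists_map_eq 1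
  have hd : d ∈ crossedHom χ (T : Set G) := hle ⟨h.isCrossedHom, by simp⟩
  exact one_ne_zero (hdu.symm.trans (hd.2 u (hUT hu)))

end IsFirstDetection

lemma IsChiefCoordinate.lift_isFirstDetection (h : IsChiefCoordinate W V χ π) (hU : U.Normal)
    (hWU : W ≤ U) (hχ : U ≤ χ.ker) (hd : d ∈ extensions χ π W ∅) (hdg : d g ≠ 0)
    (hg : ¬ Detects χ W g) : IsFirstDetection g U (U ⊓ hd.1.1.ker) χ d where
  toIsChiefCoordinate := h.lift hU hWU hχ hd.1.1 hd.2
  isCrossedHom := hd.1.1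
  map_ne_zero := hdg
  not_detects := fun hgU => hg (hgU.anti hWU)

/-- Whenever some crossed homomorphism, with a character trivial on `T`, vanishes on `U` but not
on `T`, there is one vanishing on `U` but not at `g`. As an invariant of the descent from `T`, this
leaves so few crossed homomorphisms at a first detection that `c(∅) ≤ q`. -/
def DetectsBetween (g : G) (T U : Subgroup G) : Prop :=
  ∀ (i : FieldIndex) (χ : G →* IndexedField i), T ≤ χ.ker →
    crossedHom χ (U : Set G) ≤ crossedHom χ (T : Set G) ∨ Detects χ U g

lemma IsFirstDetection.detectsBetween (h : IsFirstDetection g U V χ d) (hUT : U ≤ T)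
    (hU : DetectsBetween g T U) : DetectsBetween g T V := by
  intro j χ' hχ'
  by_cases hle : crossedHom χ' (V : Set G) ≤ crossedHom χ' (U : Set G)
  · exact (hU j χ' hχ').imp hle.trans (Detects.anti h.lt.le)
  obtain ⟨e, he, heU⟩ := SetLike.not_le_iff_exists.1 hle
  obtain ⟨φ, hinj, hφ, hφe⟩ := h.exists_addMonoidHom_comp_eq (hUT.trans hχ') he heU
  refine .inr ⟨φ ∘ d, ⟨fun x y => ?_, fun v hv => ?_⟩, ?_⟩
  · simp only [Function.comp_apply, h.isCrossedHom x y, map_add, hφ]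
  · exact (hφe v (h.lt.le hv)).trans (he.2 v hv)
  · exact (map_ne_zero_iff φ hinj).2 h.map_ne_zero

end Detection

section GainBound

variable {G : Type*} [Group G] {g : G} {U V S T : Subgroup G}

/-- Bounds by how much, modulo `U`, the element `g` and `n` random elements are likelier to generate
than `n + 1` random elements: each character in `Λ` contributes at most `q⁻ⁿ`, where `q` is the
order of its field. -/
structure IsGainBound (g : G) (U : Subgroup G) (Λ : Finset (Σ i, G →* IndexedField i)) : Prop where
  map_eq_one : ∀ s ∈ Λ, s.2 g = 1
  detects : ∀ s ∈ Λ, Detects s.2 U g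
  sub_le : ∀ n, relGenProb {g} U n - relGenProb ∅ U (n + 1) ≤
    ∑ s ∈ Λ, ((Nat.card (IndexedField s.1) : ℝ) ^ n)⁻¹

namespace IsGainBound

variable [Finite G] {Λ : Finset (Σ i, G →* IndexedField i)} {i : FieldIndex}
  {χ : G →* IndexedField i} {π d : G → IndexedField i}

lemma top_empty (g : G) : IsGainBound g ⊤ ∅ where
  map_eq_one := by simp
  detects := by simp
  sub_le n := by simp [relGenProb_top]

lemma of_card_extensions_le (hΛ : IsGainBound g U Λ) (h : IsChiefCoordinate U V χ π)
    (hcard : Nat.card (extensions χ π U ∅) ≤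
      Nat.card (IndexedField i) * Nat.card (extensions χ π U {g})) : IsGainBound g V Λ where
  map_eq_one := hΛ.map_eq_one
  detects s hs := (hΛ.detects s hs).anti h.lt.le
  sub_le n := by
    have hsum : 0 ≤ ∑ s ∈ Λ, ((Nat.card (IndexedField s.1) : ℝ) ^ n)⁻¹ := by positivity
    have hq : (0 : ℝ) < Nat.card (IndexedField i) := Nat.cast_pos.2 Nat.card_pos
    have hbound := hΛ.sub_le n
    have hfactor : (Nat.card (extensions χ π U ∅) : ℝ) / (Nat.card (IndexedField i) : ℝ) ^ (n + 1) ≤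
        Nat.card (extensions χ π U {g}) / (Nat.card (IndexedField i) : ℝ) ^ n := by
      rw [div_le_div_iff₀ (by positivity) (by positivity), pow_succ']
      have hcard : (Nat.card (extensions χ π U ∅) : ℝ) ≤
        Nat.card (IndexedField i) * Nat.card (extensions χ π U {g}) := mod_cast hcard
      nlinarith [pow_pos hq n]
    have hg := mul_le_mul_of_nonneg_left (sub_le_sub_left hfactor 1)
      (relGenProb_nonneg {g} U n)
    have hempty := relGenProb_nonneg ∅ V (n + 1)
    have ht : 1 - (Nat.card (extensions χ π U ∅) : ℝ) /
        (Nat.card (IndexedField i) : ℝ) ^ (n + 1) ≤ 1 :=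
      sub_le_self _ (by positivity)
    rw [← h.relGenProb_eq] at hg
    have hV := h.relGenProb_eq ∅ (n + 1)
    set t := 1 - (Nat.card (extensions χ π U ∅) : ℝ) / (Nat.card (IndexedField i) : ℝ) ^ (n + 1)
    rcases le_total 0 t with ht₀ | ht₀
    · calc relGenProb {g} V n - relGenProb ∅ V (n + 1)
          ≤ (relGenProb {g} U n - relGenProb ∅ U (n + 1)) * t := by linarith
        _ ≤ (∑ s ∈ Λ, ((Nat.card (IndexedField s.1) : ℝ) ^ n)⁻¹) * t := by gcongr
        _ ≤ _ := mul_le_of_le_one_right hsum ht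
    · linarith [mul_nonpos_of_nonneg_of_nonpos (relGenProb_nonneg {g} U n) ht₀]

lemma cons (hΛ : IsGainBound g U Λ) (h : IsFirstDetection g U V χ d)
    (hcard : Nat.card (extensions χ d U ∅) ≤ Nat.card (IndexedField i)) :
    IsGainBound g V (Λ.cons ⟨i, χ⟩ fun hs => h.not_detects (hΛ.detects ⟨i, χ⟩ hs)) where
  map_eq_one := (Finset.forall_mem_cons _ _).2
    ⟨map_eq_one_of_not_detects h.le_ker h.not_detects, hΛ.map_eq_one⟩
  detects := (Finset.forall_mem_cons _ _).2
    ⟨h.detects, fun s hs => (hΛ.detects s hs).anti h.lt.le⟩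
  sub_le n := by
    have hq : (0 : ℝ) < Nat.card (IndexedField i) := Nat.cast_pos.2 Nat.card_pos
    have hfactor : (Nat.card (extensions χ d U ∅) : ℝ) / (Nat.card (IndexedField i) : ℝ) ^ (n + 1) ≤
        ((Nat.card (IndexedField i) : ℝ) ^ n)⁻¹ := by
      rw [div_le_iff₀ (by positivity), pow_succ', mul_comm, mul_assoc,
        mul_inv_cancel₀ (by positivity), mul_one]
      exact_mod_cast hcard
    have hV : relGenProb ∅ U (n + 1) - ((Nat.card (IndexedField i) : ℝ) ^ n)⁻¹ ≤
        relGenProb ∅ V (n + 1) := by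
      have h₁ := relGenProb_le_one ∅ U (n + 1)
      have h₀ := relGenProb_nonneg ∅ U (n + 1)
      have : (0 : ℝ) ≤ ((Nat.card (IndexedField i) : ℝ) ^ n)⁻¹ := by positivity
      rw [h.relGenProb_eq]
      nlinarith
    rw [Finset.sum_cons]
    linarith [hΛ.sub_le n, relGenProb_mono {g} h.lt.le n]

lemma of_le_or_exists_isFirstDetection (hnil : Group.IsNilpotent (commutator G)) (hS : S.Normal)
    (hcentral : ∀ W W', IsChiefFactor W W' → S ≤ W' → W ≤ T → ⁅W, T⁆ ≤ W') (hU : U.Normal)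
    (hSU : S ≤ U) (hUT : U ≤ T) (hΛ : IsGainBound g U Λ) :
    IsGainBound g S Λ ∨ ∃ V i, ∃ (χ : G →* IndexedField i) (d : G → IndexedField i),
      S ≤ V ∧ T ≤ χ.ker ∧ IsFirstDetection g U V χ d := by
  induction U using WellFoundedLT.induction with | ind U ih
  obtain rfl | hlt := hSU.eq_or_lt
  · exact .inl hΛ
  obtain ⟨W, hSW, hfactor⟩ := exists_isChiefFactor hS hU hlt
  obtain ⟨i, χ, π, h⟩ := hfactor.exists_isChiefCoordinate hnil
  have hχ : T ≤ χ.ker := h.le_ker_of_commutator_le (hcentral U W hfactor hSW hUT)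
  rcases card_extensions_le_mul_or (π := π) g with hcard | ⟨hg, d, hd, hdg⟩
  · refine (ih W h.lt h.normal_bot hSW (h.lt.le.trans hUT)
      (hΛ.of_card_extensions_le h hcard)).imp_right ?_
    rintro ⟨V, j, χ', d, hSV, hχ', h'⟩
    have hd : d ∈ extensions χ' d W ∅ := ⟨⟨h'.isCrossedHom, by simp⟩, fun _ _ => rfl⟩
    refine ⟨_, j, χ', d, le_inf hSU fun s hs => ?_, hχ', h'.lift_isFirstDetection hU h.lt.le
      (hUT.trans hχ') hd h'.map_ne_zero h'.not_detects⟩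
    exact (h'.map_eq_zero_iff s (hSW hs)).2 (hSV hs)
  · refine .inr ⟨_, i, χ, d, le_inf hSU fun s hs => ?_, hχ,
      h.lift_isFirstDetection hU le_rfl (hUT.trans hχ) hd hdg hg⟩
    exact (hd.2 (hSU hs)).trans ((h.map_eq_zero_iff s (hSU hs)).2 (hSW hs))

lemma exists_of_le (hnil : Group.IsNilpotent (commutator G)) (hS : S.Normal)
    (hcentral : ∀ W W', IsChiefFactor W W' → S ≤ W' → W ≤ T → ⁅W, T⁆ ≤ W')
    (hcard : ∀ i (χ : G →* IndexedField i), T ≤ χ.ker →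
      ¬ crossedHom χ ∅ ≤ crossedHom χ (T : Set G) →
        Nat.card (crossedHom χ (T : Set G)) ≤ Nat.card (IndexedField i))
    (hU : U.Normal) (hSU : S ≤ U) (hUT : U ≤ T) (hdet : DetectsBetween g T U)
    (hΛ : IsGainBound g U Λ) : ∃ Λ', IsGainBound g S Λ' := by
  induction U using WellFoundedLT.induction generalizing Λ with | ind U ih
  rcases hΛ.of_le_or_exists_isFirstDetection hnil hS hcentral hU hSU hUT with
    hΛ' | ⟨V, i, χ, d, hSV, hχ, h⟩
  · exact ⟨Λ, hΛ'⟩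
  have hle : crossedHom χ (U : Set G) ≤ crossedHom χ (T : Set G) :=
    (hdet i χ hχ).resolve_right h.not_detects
  have hq : Nat.card (extensions χ d U ∅) ≤ Nat.card (IndexedField i) :=
    card_extensions_le.trans <| (Nat.card_mono (Set.toFinite _) hle).trans <|
      hcard i χ hχ (h.not_empty_le hUT)
  exact ih V h.lt h.normal_bot hSV (h.lt.le.trans hUT) (h.detectsBetween hUT hdet) (hΛ.cons h hq)

end IsGainBound

lemma detectsBetween_self (g : G) (T : Subgroup G) : DetectsBetween g T T :=
  fun _ _ _ => .inl le_rfl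

lemma exists_isGainBound_bot [Finite G] (hnil : Group.IsNilpotent (commutator G)) (g : G) :
    ∃ Λ, IsGainBound g ⊥ Λ := by
  have htop : ∀ i (χ : G →* IndexedField i), crossedHom χ ((⊤ : Subgroup G) : Set G) = ⊥ :=
    fun i χ => crossedHom_eq_bot_of_closure_eq_top (closure_eq ⊤)
  obtain ⟨Λ, hΛ⟩ : ∃ Λ, IsGainBound g (commutator G) Λ :=
    (IsGainBound.top_empty g).exists_of_le hnil inferInstance
      (fun W W' _ hW' _ => (commutator_mono le_top le_rfl).trans hW')
      (fun i χ _ _ => by rw [htop, Nat.card_unique]; exact Nat.card_pos) inferInstance le_top le_rfl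
      (detectsBetween_self g ⊤)
  refine hΛ.exists_of_le hnil inferInstance (fun W W' h _ _ => h.commutator_commutator_le hnil)
    (fun i χ _ hχ => card_crossedHom_commutator_le ?_) inferInstance bot_le le_rfl
    (detectsBetween_self g _)
  rintro rfl
  exact hχ crossedHom_one_empty_le_commutator

end GainBound

section SumBound

lemma sum_inv_sq_le_one (Q : Finset ℕ) (hQ : ∀ q ∈ Q, 1 < q) :
    ∑ q ∈ Q, ((q : ℝ) ^ 2)⁻¹ ≤ 1 := by
  have hsub : Q ⊆ Finset.Ioc 1 (1 + Q.sup id) := fun q hq =>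
    Finset.mem_Ioc.2 ⟨hQ q hq, (Finset.le_sup (f := id) hq).trans (Nat.le_add_left _ _)⟩
  calc ∑ q ∈ Q, ((q : ℝ) ^ 2)⁻¹
      ≤ ∑ q ∈ Finset.Ioc 1 (1 + Q.sup id), ((q : ℝ) ^ 2)⁻¹ :=
        Finset.sum_le_sum_of_subset_of_nonneg hsub fun _ _ _ => by positivity
    _ ≤ ((1 : ℕ) : ℝ)⁻¹ - ((1 + Q.sup id : ℕ) : ℝ)⁻¹ :=
        sum_Ioc_inv_sq_le_sub one_ne_zero (Nat.le_add_right _ _)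
    _ ≤ 1 := by
        rw [Nat.cast_one, inv_one]
        exact sub_le_self _ (by positivity)

lemma sum_inv_card_sq_le_one (I : Finset FieldIndex) :
    ∑ i ∈ I, ((Nat.card (IndexedField i) : ℝ) ^ 2)⁻¹ ≤ 1 := by
  classical
  have h := sum_inv_sq_le_one (I.image fun i => Nat.card (IndexedField i))
    (Finset.forall_mem_image.2 fun i _ => Finite.one_lt_card)
  rwa [Finset.sum_image card_indexedField_injective.injOn] at h

variable {G : Type*} [Group G] {g : G} {m : ℕ}

lemma card_monoidHom_le {M : Type*} [Monoid M] [Finite M] {v : Fin m → G}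
    (hv : closure ({g} ∪ Set.range v) = ⊤) :
    Nat.card {χ : G →* M | χ g = 1} ≤ Nat.card M ^ m := by
  have hfun : Nat.card (Fin m → M) = Nat.card M ^ m := by rw [Nat.card_fun, Nat.card_fin]
  rw [← hfun]
  refine Nat.card_le_card_of_injective (fun χ k => χ.1 (v k)) fun χ ψ heq => ?_
  refine Subtype.ext (MonoidHom.eq_of_eqOn_dense hv ?_)
  rintro x (rfl | ⟨k, rfl⟩)
  · exact χ.2.trans ψ.2.symm
  · exact congrFun heq k

lemma card_monoidHom_mul_inv_card_pow_le {M : Type*} [Monoid M] [Finite M] [Nontrivial M]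
    {v : Fin m → G} (hv : closure ({g} ∪ Set.range v) = ⊤) (k : ℕ) :
    Nat.card {χ : G →* M | χ g = 1} * ((Nat.card M : ℝ) ^ (m + (k + 2)))⁻¹ ≤
      (1 / 2) ^ k * ((Nat.card M : ℝ) ^ 2)⁻¹ := by
  have hM : (2 : ℝ) ≤ Nat.card M := mod_cast Finite.one_lt_card
  have hcard : (Nat.card {χ : G →* M | χ g = 1} : ℝ) ≤ (Nat.card M : ℝ) ^ m :=
    mod_cast card_monoidHom_le hv
  calc Nat.card {χ : G →* M | χ g = 1} * ((Nat.card M : ℝ) ^ (m + (k + 2)))⁻¹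
      ≤ (Nat.card M : ℝ) ^ m * ((Nat.card M : ℝ) ^ (m + (k + 2)))⁻¹ := by gcongr
    _ = (1 / (Nat.card M : ℝ)) ^ k * ((Nat.card M : ℝ) ^ 2)⁻¹ := by
        rw [pow_add, pow_add, one_div, inv_pow]
        field_simp
    _ ≤ (1 / 2) ^ k * ((Nat.card M : ℝ) ^ 2)⁻¹ := by gcongr

lemma sum_inv_card_pow_le [Finite G] {Λ : Finset (Σ i, G →* IndexedField i)}
    (hΛ : ∀ s ∈ Λ, s.2 g = 1) {v : Fin m → G} (hv : closure ({g} ∪ Set.range v) = ⊤) (k : ℕ) :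
    ∑ s ∈ Λ, ((Nat.card (IndexedField s.1) : ℝ) ^ (m + (k + 2)))⁻¹ ≤ (1 / 2) ^ k := by
  classical
  have hfin (i : FieldIndex) : {χ : G →* IndexedField i | χ g = 1}.Finite :=
    have : Finite (G →* IndexedField i) := DFunLike.finite _
    Set.toFinite _
  let chars (i : FieldIndex) : Finset (G →* IndexedField i) := (hfin i).toFinset
  have hsub : Λ ⊆ (Λ.image Sigma.fst).sigma chars := fun s hs =>
    Finset.mem_sigma.2 ⟨Finset.mem_image_of_mem _ hs, (hfin s.1).mem_toFinset.2 (hΛ s hs)⟩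
  have hfield : ∀ i, ∑ _χ ∈ chars i, ((Nat.card (IndexedField i) : ℝ) ^ (m + (k + 2)))⁻¹ ≤
      (1 / 2) ^ k * ((Nat.card (IndexedField i) : ℝ) ^ 2)⁻¹ := by
    intro i
    rw [Finset.sum_const, nsmul_eq_mul, ← Set.ncard_eq_toFinset_card _ (hfin i)]
    exact card_monoidHom_mul_inv_card_pow_le hv k
  calc ∑ s ∈ Λ, ((Nat.card (IndexedField s.1) : ℝ) ^ (m + (k + 2)))⁻¹
      ≤ ∑ s ∈ (Λ.image Sigma.fst).sigma chars,
          ((Nat.card (IndexedField s.1) : ℝ) ^ (m + (k + 2)))⁻¹ :=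
        Finset.sum_le_sum_of_subset_of_nonneg hsub fun _ _ _ => by positivity
    _ = ∑ i ∈ Λ.image Sigma.fst, ∑ _χ ∈ chars i,
          ((Nat.card (IndexedField i) : ℝ) ^ (m + (k + 2)))⁻¹ := Finset.sum_sigma _ _ _
    _ ≤ ∑ i ∈ Λ.image Sigma.fst, (1 / 2) ^ k * ((Nat.card (IndexedField i) : ℝ) ^ 2)⁻¹ :=
        Finset.sum_le_sum fun i _ => hfield i
    _ ≤ (1 / 2) ^ k := by
        rw [← Finset.mul_sum]
        exact mul_le_of_le_one_right (by positivity) (sum_inv_card_sq_le_one _)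

end SumBound

section ExpectedTime

variable {G : Type*} [Group G]

lemma genProb_nonneg (Y : Set G) (n : ℕ) : 0 ≤ genProb G Y n :=
  relGenProb_bot Y n ▸ relGenProb_nonneg Y ⊥ n

lemma genProb_le_one [Finite G] (Y : Set G) (n : ℕ) : genProb G Y n ≤ 1 :=
  relGenProb_bot Y n ▸ relGenProb_le_one Y ⊥ n

lemma card_pow_le_of_ne_top [Finite G] {H : Subgroup G} (hH : H ≠ ⊤) (n : ℕ) :
    (Nat.card H : ℝ) ^ n ≤ (Nat.card G : ℝ) ^ n * (1 / 2) ^ n := by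
  have hindex : Nat.card H * 2 ≤ Nat.card G :=
    H.card_mul_index ▸ Nat.mul_le_mul_left _ (H.one_lt_index_of_ne_top hH)
  have hindex : (Nat.card H : ℝ) * 2 ≤ Nat.card G := mod_cast hindex
  rw [← mul_pow]
  gcongr
  linarith

lemma card_not_generating_le [Finite G] (Y : Set G) (n : ℕ) :
    (Nat.card {v : Fin n → G // closure (Y ∪ Set.range v) ≠ ⊤} : ℝ) ≤
      Nat.card (Subgroup G) * ((Nat.card G : ℝ) ^ n * (1 / 2) ^ n) := by
  have := Fintype.ofFinite {H : Subgroup G // H ≠ ⊤}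
  have hcover : Nat.card {v : Fin n → G // closure (Y ∪ Set.range v) ≠ ⊤} ≤
      Nat.card (Σ H : {H : Subgroup G // H ≠ ⊤}, Fin n → H.1) := by
    refine Nat.card_le_card_of_injective
      (fun v => ⟨⟨_, v.2⟩, fun k => ⟨v.1 k, subset_closure (.inr ⟨k, rfl⟩)⟩⟩) fun v w heq => ?_
    have hval := congrArg (fun p : Σ H : {H : Subgroup G // H ≠ ⊤}, Fin n → H.1 =>
      fun k => (p.2 k : G)) heq
    exact Subtype.ext hval
  calc (Nat.card {v : Fin n → G // closure (Y ∪ Set.range v) ≠ ⊤} : ℝ)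
      ≤ Nat.card (Σ H : {H : Subgroup G // H ≠ ⊤}, Fin n → H.1) := mod_cast hcover
    _ = ∑ H : {H : Subgroup G // H ≠ ⊤}, (Nat.card H.1 : ℝ) ^ n := by
        simp [Nat.card_sigma, Nat.card_fun]
    _ ≤ ∑ _H : {H : Subgroup G // H ≠ ⊤}, (Nat.card G : ℝ) ^ n * (1 / 2) ^ n :=
        Finset.sum_le_sum fun H _ => card_pow_le_of_ne_top H.2 n
    _ ≤ Nat.card (Subgroup G) * ((Nat.card G : ℝ) ^ n * (1 / 2) ^ n) := by
        rw [Finset.sum_const, nsmul_eq_mul, Finset.card_univ, ← Nat.card_eq_fintype_card]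
        gcongr
        exact Finite.card_subtype_le _

lemma summable_one_sub_genProb [Finite G] (Y : Set G) :
    Summable fun n => 1 - genProb G Y n := by
  refine Summable.of_nonneg_of_le (fun n => sub_nonneg.2 (genProb_le_one Y n)) (fun n => ?_)
    (summable_geometric_two.mul_left (Nat.card (Subgroup G) : ℝ))
  have hG : (0 : ℝ) < Nat.card G := Nat.cast_pos.2 Nat.card_pos
  have hsplit : Nat.card {v : Fin n → G // closure (Y ∪ Set.range v) = ⊤} +
      Nat.card {v : Fin n → G // closure (Y ∪ Set.range v) ≠ ⊤} = Nat.card G ^ n := by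
    classical
    rw [← Nat.card_sum, Nat.card_congr (Equiv.sumCompl _), Nat.card_fun, Nat.card_fin]
  have hbad := card_not_generating_le Y n
  rify at hsplit
  rw [genProb, sub_le_iff_le_add, ← sub_le_iff_le_add', le_div_iff₀ (by positivity)]
  linarith

lemma exists_genProb_sub_le [Finite G] (hnil : Group.IsNilpotent (commutator G)) (g : G) :
    ∃ m, (∀ n < m, genProb G {g} n = 0) ∧
      ∀ k, genProb G {g} (k + m) - genProb G ∅ (k + m + 1) ≤ (1 / 2) ^ (k - 2) := by
  classical
  obtain ⟨Λ, hΛ⟩ := exists_isGainBound_bot hnil g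
  have hex : ∃ m, ∃ v : Fin m → G, closure ({g} ∪ Set.range v) = ⊤ := by
    obtain ⟨m, ⟨e⟩⟩ := Finite.exists_equiv_fin G
    exact ⟨m, e.symm, by simp [e.symm.surjective.range_eq]⟩
  refine ⟨Nat.find hex, fun n hn => ?_, fun k => ?_⟩
  · have : IsEmpty {v : Fin n → G // closure ({g} ∪ Set.range v) = ⊤} :=
      ⟨fun v => Nat.find_min hex hn ⟨v.1, v.2⟩⟩
    rw [genProb, Nat.card_of_isEmpty, Nat.cast_zero, zero_div]
  obtain ⟨v, hv⟩ := Nat.find_spec hex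
  rcases le_or_gt k 2 with hk | hk
  · rw [Nat.sub_eq_zero_of_le hk, pow_zero]
    linarith [genProb_le_one {g} (k + Nat.find hex),
      genProb_nonneg (∅ : Set G) (k + Nat.find hex + 1)]
  · obtain ⟨j, rfl⟩ := Nat.exists_eq_add_of_le' hk.le
    have hsum := hΛ.sub_le (j + 2 + Nat.find hex)
    rw [relGenProb_bot, relGenProb_bot, add_comm _ (Nat.find hex)] at hsum
    rw [add_comm _ (Nat.find hex), Nat.add_sub_cancel]
    exact hsum.trans (sum_inv_card_pow_le hΛ.map_eq_one hv j)

end ExpectedTime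

lemma hasSum_half_pow_sub_two : HasSum (fun k : ℕ => (1 / 2 : ℝ) ^ (k - 2)) 4 := by
  have hsum : 4 - ∑ k ∈ Finset.range 2, (1 / 2 : ℝ) ^ (k - 2) = 2 := by
    norm_num [Finset.sum_range_succ]
  rw [← hasSum_nat_add_iff' 2, hsum]
  simpa only [Nat.add_sub_cancel] using hasSum_geometric_two

theorem stmt17_general (G : Type*) [Group G] [Finite G]
    (hnil : Group.IsNilpotent (commutator G)) (g : G) :
    eTime G ∅ - eTime G {g} ≤ 5 := by
  obtain ⟨m, hzero, hle⟩ := exists_genProb_sub_le hnil g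
  have hempty := summable_one_sub_genProb (∅ : Set G)
  have hg := summable_one_sub_genProb ({g} : Set G)
  have hshift := (summable_nat_add_iff 1).2 hempty
  have hdiff : Summable fun n => genProb G {g} n - genProb G ∅ (n + 1) :=
    (hshift.sub hg).congr fun n => by ring
  have hsplit : eTime G ∅ - eTime G {g} =
      1 - genProb G ∅ 0 + ∑' n, (genProb G {g} n - genProb G ∅ (n + 1)) := by
    rw [eTime, eTime, hempty.tsum_eq_zero_add, add_sub_assoc, ← hshift.tsum_sub hg]
    congr! 3
    ring
  have hinit : ∑ n ∈ Finset.range m, (genProb G {g} n - genProb G ∅ (n + 1)) ≤ 0 :=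
    Finset.sum_nonpos fun n hn => by
      rw [hzero n (Finset.mem_range.1 hn), zero_sub]
      exact neg_nonpos.2 (genProb_nonneg _ _)
  have htail : ∑' k, (genProb G {g} (k + m) - genProb G ∅ (k + m + 1)) ≤ 4 :=
    hasSum_half_pow_sub_two.tsum_eq ▸
      ((summable_nat_add_iff m).2 hdiff).tsum_le_tsum hle hasSum_half_pow_sub_two.summable
  rw [hsplit, ← hdiff.sum_add_tsum_nat_add m]
  linarith [genProb_nonneg (∅ : Set G) 0]

/-- If the derived subgroup of a finite group `G` is nilpotent, then
`e(G) - e(G,g) ≤ 11` for every `g ∈ G`. -/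
theorem stmt17 (G : Type*) [Group G] [Finite G]
    (hnil : Group.IsNilpotent (commutator G)) (g : G) :
    eTime G ∅ - eTime G {g} ≤ 11 :=
  (stmt17_general G hnil g).trans (by norm_num)
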